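/- Let F₁₆ = F₂(a) where a is a root of the irreducible polynomial X⁴ + X + 1 over F₂. The polynomial Q(X) = X¹³ + a⁶X¹² + a⁵X¹¹ + a¹¹X¹⁰ + X⁹ + a¹²X⁸ + a⁷X⁷ + a⁷X⁵ + a²X⁴ + a¹¹X³ + a⁸X² + a⁶X + a¹⁴ ∈ F₁₆[X] is irreducible over F₁₆, and for every root b of Q in the degree-13 extension F_{16^13} of F₁₆, there exists y ∈ F₁₆(b) = F_{16^13} with y² + y = b⁵ (equivalently, the absolute trace Tr_{F_{16^13}/F₂}(b⁵) = 0). -/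

import Mathlib

open Polynomial

namespace SplitF16

/-- Coordinates of an element of `F₁₆` in the basis `1, a, a², a³`. -/
structure F where
  x0 : Bool
  x1 : Bool
  x2 : Bool
  x3 : Bool
deriving DecidableEq

def g (n : ℕ) : F := ⟨n.testBit 0, n.testBit 1, n.testBit 2, n.testBit 3⟩

def add : F → F → F
  | ⟨a0, a1, a2, a3⟩, ⟨b0, b1, b2, b3⟩ => ⟨a0 ^^ b0, a1 ^^ b1, a2 ^^ b2, a3 ^^ b3⟩

/-- Multiplication by `a`. -/
def mulA : F → F
  | ⟨a0, a1, a2, a3⟩ => ⟨a3, a0 ^^ a3, a1, a2⟩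

def smul : Bool → F → F
  | true, x => x
  | false, _ => ⟨false, false, false, false⟩

def mul : F → F → F
  | ⟨a0, a1, a2, a3⟩, y =>
    add (smul a0 y) (mulA (add (smul a1 y) (mulA (add (smul a2 y) (mulA (smul a3 y))))))

def sq (x : F) : F := mul x x

/-- Polynomials of degree at most 12 over `F₁₆`. -/
structure P where
  c0 : F
  c1 : F
  c2 : F
  c3 : F
  c4 : F
  c5 : F
  c6 : F
  c7 : F
  c8 : F
  c9 : F
  c10 : F
  c11 : F
  c12 : F
deriving DecidableEq

def P.toList (p : P) : List F :=
  [p.c0, p.c1, p.c2, p.c3, p.c4, p.c5, p.c6, p.c7, p.c8, p.c9, p.c10, p.c11, p.c12]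

/-- Multiplication by `X` modulo `Q`. -/
def mulX : P → P
  | ⟨c0, c1, c2, c3, c4, c5, c6, c7, c8, c9, c10, c11, c12⟩ =>
    ⟨mul c12 (g 9),
      add c0 (mul c12 (g 12)),
      add c1 (mul c12 (g 5)),
      add c2 (mul c12 (g 14)),
      add c3 (mul c12 (g 4)),
      add c4 (mul c12 (g 11)),
      c5,
      add c6 (mul c12 (g 11)),
      add c7 (mul c12 (g 15)),
      add c8 (mul c12 (g 1)),
      add c9 (mul c12 (g 14)),
      add c10 (mul c12 (g 6)),
      add c11 (mul c12 (g 12))⟩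

def addC (x : F) (p : P) : P := { p with c0 := add x p.c0 }

def padd (p q : P) : P :=
  ⟨add p.c0 q.c0,
    add p.c1 q.c1,
    add p.c2 q.c2,
    add p.c3 q.c3,
    add p.c4 q.c4,
    add p.c5 q.c5,
    add p.c6 q.c6,
    add p.c7 q.c7,
    add p.c8 q.c8,
    add p.c9 q.c9,
    add p.c10 q.c10,
    add p.c11 q.c11,
    add p.c12 q.c12⟩

def iter (f : P → P) : ℕ → P → P
  | 0, p => p
  | n + 1, p => iter f n (f p)

def horner (n : ℕ) : List F → P
  | [] => ⟨g 0, g 0, g 0, g 0, g 0, g 0, g 0, g 0, g 0, g 0, g 0, g 0, g 0⟩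
  | c :: l => addC c (iter mulX n (horner n l))

def frob (p : P) : P := horner 16 p.toList

section

variable {R : Type*} [CommRing R] (h2 : (2 : R) = 0) (a : R) (ha : a ^ 4 + a + 1 = 0) (b : R)

def bv (x : Bool) : R := if x then 1 else 0

def ev (x : F) : R := bv x.x0 + bv x.x1 * a + bv x.x2 * a ^ 2 + bv x.x3 * a ^ 3

def lev : List F → R
  | [] => 0
  | c :: l => ev a c + b * lev l

def pev (p : P) : R := lev a b p.toList

include h2

theorem bv_xor (x y : Bool) : (bv (x ^^ y) : R) = bv x + bv y := by
  cases x <;> cases y <;> simp [bv]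
  linear_combination -h2

theorem ev_add (x y : F) : ev a (add x y) = ev a x + ev a y := by
  cases x; cases y
  simp only [add, ev, bv_xor h2]
  ring

theorem ev_smul (x : Bool) (y : F) : ev a (smul x y) = bv x * ev a y := by
  cases x
  · simp [smul, bv, ev]
  · simp only [smul, bv, if_true, one_mul]

include ha

theorem ev_mulA (x : F) : ev a (mulA x) = a * ev a x := by
  cases x with | mk a0 a1 a2 a3 =>
  simp only [mulA, ev, bv_xor h2]
  linear_combination (bv a3 : R) * ((1 + a) * h2 - ha)

theorem ev_mul (x y : F) : ev a (mul x y) = ev a x * ev a y := by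
  cases x
  simp only [mul, ev_add h2, ev_mulA h2 a ha, ev_smul h2]
  simp only [ev]
  ring

theorem ev_sq (x : F) : ev a (sq x) = ev a x ^ 2 := by
  rw [sq, ev_mul h2 a ha, pow_two]

theorem lev_sq (l : List F) : lev a (b ^ 2) (l.map sq) = lev a b l ^ 2 := by
  induction l with
  | nil => simp [lev]
  | cons c l ih =>
    simp only [List.map_cons, lev, ih, ev_sq h2 a ha]
    linear_combination -(ev a c * b * lev a b l) * h2

theorem lev_pow16 (l : List F) : lev a (b ^ 16) l = lev a b l ^ 16 := by
  have h : ∀ l : List F, (((l.map sq).map sq).map sq).map sq = l := by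
    have : ∀ x : F, sq (sq (sq (sq x))) = x := by
      rintro ⟨_ | _, _ | _, _ | _, _ | _⟩ <;> rfl
    intro l
    simp [Function.comp_def, this]
  have e : lev a ((((b ^ 2) ^ 2) ^ 2) ^ 2) ((((l.map sq).map sq).map sq).map sq)
      = (((lev a b l ^ 2) ^ 2) ^ 2) ^ 2 := by
    simp only [lev_sq h2 a ha]
  rw [h] at e
  simpa only [← pow_mul] using e

variable (hb : b ^ 13 + a ^ 6 * b ^ 12 + a ^ 5 * b ^ 11 + a ^ 11 * b ^ 10
        + b ^ 9 + a ^ 12 * b ^ 8 + a ^ 7 * b ^ 7 + a ^ 7 * b ^ 5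
        + a ^ 2 * b ^ 4 + a ^ 11 * b ^ 3 + a ^ 8 * b ^ 2 + a ^ 6 * b
        + a ^ 14 = 0)

theorem pows : ev a (g 0) = 0 ∧ ev a (g 1) = 1 ∧ ev a (g 4) = a ^ 2 ∧ ev a (g 6) = a ^ 5 ∧
    ev a (g 12) = a ^ 6 ∧ ev a (g 11) = a ^ 7 ∧ ev a (g 5) = a ^ 8 ∧ ev a (g 14) = a ^ 11 ∧
    ev a (g 15) = a ^ 12 ∧ ev a (g 9) = a ^ 14 := by
  have e2 : ev a (g 2) = a := by simp [ev, bv, g, Nat.testBit]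
  have e1 : ev a (g 1) = 1 := by simp [ev, bv, g, Nat.testBit]
  have e0 : ev a (g 0) = 0 := by simp [ev, bv, g, Nat.testBit]
  have key : ∀ m n k : ℕ, ev a (g m) = a ^ k → mulA (g m) = g n → ev a (g n) = a ^ (k + 1) := by
    intro m n k h h'
    rw [← h', ev_mulA h2 a ha, h, pow_succ, mul_comm]
  have p1 : ev a (g 2) = a ^ 1 := by rw [e2, pow_one]
  have p2 := key 2 4 1 p1 (by decide)
  have p3 := key 4 8 2 p2 (by decide)
  have p4 := key 8 3 3 p3 (by decide)
  have p5 := key 3 6 4 p4 (by decide)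
  have p6 := key 6 12 5 p5 (by decide)
  have p7 := key 12 11 6 p6 (by decide)
  have p8 := key 11 5 7 p7 (by decide)
  have p9 := key 5 10 8 p8 (by decide)
  have p10 := key 10 7 9 p9 (by decide)
  have p11 := key 7 14 10 p10 (by decide)
  have p12 := key 14 15 11 p11 (by decide)
  have p13 := key 15 13 12 p12 (by decide)
  have p14 := key 13 9 13 p13 (by decide)
  exact ⟨e0, e1, p2, p5, p6, p7, p8, p11, p12, p14⟩

omit ha in
theorem pev_addC (x : F) (p : P) : pev a b (addC x p) = ev a x + pev a b p := by
  simp only [pev, addC, P.toList, lev, ev_add h2]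
  ring

omit ha in
theorem pev_padd (p q : P) : pev a b (padd p q) = pev a b p + pev a b q := by
  simp only [pev, padd, P.toList, lev, ev_add h2]
  ring

include hb

theorem pev_mulX (p : P) : pev a b (mulX p) = b * pev a b p := by
  obtain ⟨e0, e1, e2, e5, e6, e7, e8, e11, e12, e14⟩ := pows h2 a ha
  cases p with | mk c0 c1 c2 c3 c4 c5 c6 c7 c8 c9 c10 c11 c12 =>
  simp only [pev, mulX, P.toList, lev, ev_add h2, ev_mul h2 a ha, e1, e2, e5, e6, e7, e8,
    e11, e12, e14]
  linear_combination ev a c12 * (hb - b ^ 13 * h2)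

theorem pev_iter (n : ℕ) (p : P) : pev a b (iter mulX n p) = b ^ n * pev a b p := by
  induction n generalizing p with
  | zero => simp [iter]
  | succ n ih => rw [iter, ih, pev_mulX h2 a ha b hb]; ring

theorem pev_horner (n : ℕ) (l : List F) : pev a b (horner n l) = lev a (b ^ n) l := by
  induction l with
  | nil => simp [horner, pev, P.toList, lev, (pows h2 a ha).1]
  | cons c l ih => rw [horner, pev_addC h2, pev_iter h2 a ha b hb, ih, lev]

theorem pev_frob (p : P) : pev a b (frob p) = pev a b p ^ 16 := by
  rw [frob, pev_horner h2 a ha b hb, lev_pow16 h2 a ha, pev]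

theorem step (p q : P) (n : ℕ) (h : pev a b p = b ^ n) (hf : frob p = q) :
    pev a b q = b ^ (n * 16) := by
  rw [← hf, pev_frob h2 a ha b hb, h, pow_mul]

end

theorem fr0 : frob ⟨g 0, g 1, g 0, g 0, g 0, g 0, g 0, g 0, g 0, g 0, g 0, g 0, g 0⟩ =
    ⟨g 3, g 3, g 13, g 15, g 9, g 12, g 7, g 6, g 3, g 5, g 8, g 3, g 8⟩ := by
  decide +kernel

theorem fr1 : frob ⟨g 3, g 3, g 13, g 15, g 9, g 12, g 7, g 6, g 3, g 5, g 8, g 3, g 8⟩ =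
    ⟨g 10, g 7, g 8, g 8, g 12, g 9, g 7, g 12, g 4, g 7, g 6, g 9, g 15⟩ := by
  decide +kernel

theorem fr2 : frob ⟨g 10, g 7, g 8, g 8, g 12, g 9, g 7, g 12, g 4, g 7, g 6, g 9, g 15⟩ =
    ⟨g 7, g 5, g 6, g 7, g 11, g 5, g 6, g 3, g 5, g 15, g 15, g 0, g 10⟩ := by
  decide +kernel

theorem fr3 : frob ⟨g 7, g 5, g 6, g 7, g 11, g 5, g 6, g 3, g 5, g 15, g 15, g 0, g 10⟩ =
    ⟨g 10, g 3, g 0, g 14, g 10, g 5, g 0, g 8, g 4, g 0, g 3, g 3, g 0⟩ := by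
  decide +kernel

theorem fr4 : frob ⟨g 10, g 3, g 0, g 14, g 10, g 5, g 0, g 8, g 4, g 0, g 3, g 3, g 0⟩ =
    ⟨g 10, g 2, g 4, g 9, g 12, g 13, g 11, g 7, g 3, g 6, g 6, g 3, g 12⟩ := by
  decide +kernel

theorem fr5 : frob ⟨g 10, g 2, g 4, g 9, g 12, g 13, g 11, g 7, g 3, g 6, g 6, g 3, g 12⟩ =
    ⟨g 5, g 11, g 15, g 4, g 1, g 10, g 14, g 7, g 2, g 0, g 12, g 1, g 8⟩ := by
  decide +kernel

theorem fr6 : frob ⟨g 5, g 11, g 15, g 4, g 1, g 10, g 14, g 7, g 2, g 0, g 12, g 1, g 8⟩ =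
    ⟨g 8, g 9, g 4, g 8, g 5, g 6, g 7, g 9, g 6, g 1, g 15, g 15, g 14⟩ := by
  decide +kernel

theorem fr7 : frob ⟨g 8, g 9, g 4, g 8, g 5, g 6, g 7, g 9, g 6, g 1, g 15, g 15, g 14⟩ =
    ⟨g 10, g 14, g 5, g 13, g 15, g 12, g 1, g 8, g 10, g 9, g 0, g 7, g 1⟩ := by
  decide +kernel

theorem fr8 : frob ⟨g 10, g 14, g 5, g 13, g 15, g 12, g 1, g 8, g 10, g 9, g 0, g 7, g 1⟩ =
    ⟨g 13, g 12, g 0, g 12, g 3, g 8, g 13, g 15, g 4, g 3, g 8, g 9, g 13⟩ := by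
  decide +kernel

theorem fr9 : frob ⟨g 13, g 12, g 0, g 12, g 3, g 8, g 13, g 15, g 4, g 3, g 8, g 9, g 13⟩ =
    ⟨g 1, g 7, g 6, g 8, g 15, g 2, g 3, g 13, g 4, g 13, g 7, g 13, g 11⟩ := by
  decide +kernel

theorem fr10 : frob ⟨g 1, g 7, g 6, g 8, g 15, g 2, g 3, g 13, g 4, g 13, g 7, g 13, g 11⟩ =
    ⟨g 0, g 11, g 2, g 7, g 7, g 4, g 5, g 2, g 8, g 7, g 5, g 15, g 1⟩ := by
  decide +kernel

theorem fr11 : frob ⟨g 0, g 11, g 2, g 7, g 7, g 4, g 5, g 2, g 8, g 7, g 5, g 15, g 1⟩ =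
    ⟨g 9, g 13, g 13, g 5, g 8, g 6, g 14, g 0, g 3, g 10, g 13, g 8, g 1⟩ := by
  decide +kernel

theorem fr12 : frob ⟨g 9, g 13, g 13, g 5, g 8, g 6, g 14, g 0, g 3, g 10, g 13, g 8, g 1⟩ =
    ⟨g 0, g 1, g 0, g 0, g 0, g 0, g 0, g 0, g 0, g 0, g 0, g 0, g 0⟩ := by
  decide +kernel

theorem hsol : padd (horner 2 (((⟨g 12, g 5, g 4, g 0, g 6, g 10, g 5, g 2, g 5, g 13, g 2, g 13, g 12⟩ : P).toList).map sq))
    ⟨g 12, g 5, g 4, g 0, g 6, g 10, g 5, g 2, g 5, g 13, g 2, g 13, g 12⟩ =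
    ⟨g 0, g 0, g 0, g 0, g 0, g 1, g 0, g 0, g 0, g 0, g 0, g 0, g 0⟩ := by
  decide +kernel

section

variable {R : Type*} [CommRing R] (h2 : (2 : R) = 0) (a : R) (ha : a ^ 4 + a + 1 = 0) (b : R)
    (hb : b ^ 13 + a ^ 6 * b ^ 12 + a ^ 5 * b ^ 11 + a ^ 11 * b ^ 10
        + b ^ 9 + a ^ 12 * b ^ 8 + a ^ 7 * b ^ 7 + a ^ 7 * b ^ 5
        + a ^ 2 * b ^ 4 + a ^ 11 * b ^ 3 + a ^ 8 * b ^ 2 + a ^ 6 * b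
        + a ^ 14 = 0)

include h2 ha hb

theorem exists_y : ∃ y : R, y ^ 2 + y = b ^ 5 := by
  obtain ⟨e0, e1, -⟩ := pows h2 a ha
  refine ⟨pev a b ⟨g 12, g 5, g 4, g 0, g 6, g 10, g 5, g 2, g 5, g 13, g 2, g 13, g 12⟩, ?_⟩
  have := congrArg (pev a b) hsol
  rw [pev_padd h2, pev_horner h2 a ha b hb, lev_sq h2 a ha] at this
  rw [pev, pev] at *
  rw [this]
  simp only [pev, P.toList, lev, e0, e1]
  ring

theorem pow_eq : b ^ 16 ^ 13 = b := by
  obtain ⟨e0, e1, -⟩ := pows h2 a ha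
  have q : pev a b ⟨g 0, g 1, g 0, g 0, g 0, g 0, g 0, g 0, g 0, g 0, g 0, g 0, g 0⟩ = b := by
    simp only [pev, P.toList, lev, e0, e1]
    ring
  have q0 := q.trans (pow_one b).symm
  have q1 := step h2 a ha b hb _ _ _ q0 fr0
  have q2 := step h2 a ha b hb _ _ _ q1 fr1
  have q3 := step h2 a ha b hb _ _ _ q2 fr2
  have q4 := step h2 a ha b hb _ _ _ q3 fr3
  have q5 := step h2 a ha b hb _ _ _ q4 fr4
  have q6 := step h2 a ha b hb _ _ _ q5 fr5
  have q7 := step h2 a ha b hb _ _ _ q6 fr6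
  have q8 := step h2 a ha b hb _ _ _ q7 fr7
  have q9 := step h2 a ha b hb _ _ _ q8 fr8
  have q10 := step h2 a ha b hb _ _ _ q9 fr9
  have q11 := step h2 a ha b hb _ _ _ q10 fr10
  have q12 := step h2 a ha b hb _ _ _ q11 fr11
  have q13 := step h2 a ha b hb _ _ _ q12 fr12
  rw [q] at q13
  exact q13.symm

end

/-- The value of `Q` at an element of `F₁₆`. -/
def evalQ (x : F) : F :=
  [g 9, g 12, g 5, g 14, g 4, g 11, g 0, g 11, g 15, g 1, g 14, g 6, g 12, g 1].foldr
    (fun c r => add c (mul x r)) (g 0)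

theorem evalQ_ne (x : F) : ∃ y, mul y (evalQ x) = g 1 := by
  obtain ⟨_ | _, _ | _, _ | _, _ | _⟩ := x
  · exact ⟨g 2, by decide +kernel⟩
  · exact ⟨g 3, by decide +kernel⟩
  · exact ⟨g 8, by decide +kernel⟩
  · exact ⟨g 13, by decide +kernel⟩
  · exact ⟨g 1, by decide +kernel⟩
  · exact ⟨g 3, by decide +kernel⟩
  · exact ⟨g 9, by decide +kernel⟩
  · exact ⟨g 6, by decide +kernel⟩
  · exact ⟨g 1, by decide +kernel⟩
  · exact ⟨g 6, by decide +kernel⟩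
  · exact ⟨g 9, by decide +kernel⟩
  · exact ⟨g 14, by decide +kernel⟩
  · exact ⟨g 14, by decide +kernel⟩
  · exact ⟨g 9, by decide +kernel⟩
  · exact ⟨g 2, by decide +kernel⟩
  · exact ⟨g 2, by decide +kernel⟩

theorem ev_inj {K : Type*} [Field K] (h2 : (2 : K) = 0) (a : K) (ha : a ^ 4 + a + 1 = 0) :
    Function.Injective (ev a : F → K) := by
  obtain ⟨e0, e1, -⟩ := pows h2 a ha
  have hi : ∀ z : F, z = g 0 ∨ mul (mul (sq z) (mul (sq (sq z)) (sq (sq (sq z))))) z = g 1 := by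
    rintro ⟨_ | _, _ | _, _ | _, _ | _⟩ <;> decide
  have hx : ∀ x y : F, add x y = g 0 → x = y := by
    rintro ⟨x0, x1, x2, x3⟩ ⟨y0, y1, y2, y3⟩ h
    simpa [add, g] using h
  intro x y h
  apply hx
  rcases hi (add x y) with h' | h'
  · exact h'
  · exfalso
    have := congrArg (ev a) h'
    rw [ev_mul h2 a ha, ev_add h2, h, e1] at this
    have h3 : ev a y + ev a y = 0 := by linear_combination ev a y * h2
    rw [h3, mul_zero] at this
    exact zero_ne_one this

def equivF : F ≃ Bool × Bool × Bool × Bool where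
  toFun x := (x.x0, x.x1, x.x2, x.x3)
  invFun x := ⟨x.1, x.2.1, x.2.2.1, x.2.2.2⟩
  left_inv _ := rfl
  right_inv _ := rfl

theorem ev_surj {K : Type*} [Field K] [Fintype K] (hK : Fintype.card K = 16)
    (h2 : (2 : K) = 0) (a : K) (ha : a ^ 4 + a + 1 = 0) (r : K) : ∃ x : F, ev a x = r := by
  have hi := (ev_inj h2 a ha).comp equivF.symm.injective
  have hb := (Fintype.bijective_iff_injective_and_card _).2 ⟨hi, by rw [hK]; rfl⟩
  obtain ⟨x, hx⟩ := hb.2 r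
  exact ⟨_, hx⟩

theorem no_root {K : Type*} [Field K] [Fintype K] (hK : Fintype.card K = 16)
    (h2 : (2 : K) = 0) (a : K) (ha : a ^ 4 + a + 1 = 0) (b : K)
    (hb : b ^ 13 + a ^ 6 * b ^ 12 + a ^ 5 * b ^ 11 + a ^ 11 * b ^ 10
        + b ^ 9 + a ^ 12 * b ^ 8 + a ^ 7 * b ^ 7 + a ^ 7 * b ^ 5
        + a ^ 2 * b ^ 4 + a ^ 11 * b ^ 3 + a ^ 8 * b ^ 2 + a ^ 6 * b
        + a ^ 14 = 0) : False := by
  obtain ⟨e0, e1, e2, e5, e6, e7, e8, e11, e12, e14⟩ := pows h2 a ha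
  obtain ⟨x, rfl⟩ := ev_surj hK h2 a ha b
  obtain ⟨y, hy⟩ := evalQ_ne x
  have h : ev a (evalQ x) = 0 := by
    rw [← hb]
    simp only [evalQ, List.foldr, ev_add h2, ev_mul h2 a ha, e0, e1, e2, e5, e6, e7, e8,
      e11, e12, e14]
    ring
  have := congrArg (ev a) hy
  rw [ev_mul h2 a ha, h, mul_zero, e1] at this
  exact zero_ne_one this

end SplitF16

/-- Section 5.1.1 of the paper: with `F₁₆ = F₂(a)` (`K` a field with 16 elements and
`a` a root of the irreducible polynomial `X⁴ + X + 1` over `F₂`), the polynomial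
`Q(X) = X¹³ + a⁶X¹² + a⁵X¹¹ + a¹¹X¹⁰ + X⁹ + a¹²X⁸ + a⁷X⁷ + a⁷X⁵ + a²X⁴ + a¹¹X³ + a⁸X²
+ a⁶X + a¹⁴` is irreducible over `F₁₆`, and for every root `b` of `Q` in the degree-13
extension `F_{16^13}` of `F₁₆` the Artin–Schreier equation `y² + y = b⁵` is solvable
there (equivalently, the absolute trace of `b⁵` vanishes), so the place `(Q(x))` splits
totally in the function field of `y² + y = x⁵`. -/
theorem splitting_place_F16_13
    (K : Type*) [Field K] [Fintype K] (hK : Fintype.card K = 16)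
    (a : K) (ha : a ^ 4 + a + 1 = 0) :
    Irreducible (X ^ 13 + C (a ^ 6) * X ^ 12 + C (a ^ 5) * X ^ 11 + C (a ^ 11) * X ^ 10
        + X ^ 9 + C (a ^ 12) * X ^ 8 + C (a ^ 7) * X ^ 7 + C (a ^ 7) * X ^ 5
        + C (a ^ 2) * X ^ 4 + C (a ^ 11) * X ^ 3 + C (a ^ 8) * X ^ 2 + C (a ^ 6) * X
        + C (a ^ 14) : K[X]) ∧
      ∀ (L : Type*) [Field L] [Algebra K L], Module.finrank K L = 13 →
        ∀ b : L,
          Polynomial.aeval b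
              (X ^ 13 + C (a ^ 6) * X ^ 12 + C (a ^ 5) * X ^ 11 + C (a ^ 11) * X ^ 10
                + X ^ 9 + C (a ^ 12) * X ^ 8 + C (a ^ 7) * X ^ 7 + C (a ^ 7) * X ^ 5
                + C (a ^ 2) * X ^ 4 + C (a ^ 11) * X ^ 3 + C (a ^ 8) * X ^ 2
                + C (a ^ 6) * X + C (a ^ 14) : K[X]) = 0 →
            ∃ y : L, y ^ 2 + y = b ^ 5 := by
  have h2 : (2 : K) = 0 := by
    have h : ((Fintype.card K : ℕ) : K) = 0 := Nat.cast_card_eq_zero K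
    rw [hK] at h
    have h4 : (2 : K) ^ 4 = 0 := by
      rw [← h]
      norm_num
    exact pow_eq_zero_iff (by norm_num) |>.1 h4
  set Q : K[X] := X ^ 13 + C (a ^ 6) * X ^ 12 + C (a ^ 5) * X ^ 11 + C (a ^ 11) * X ^ 10
        + X ^ 9 + C (a ^ 12) * X ^ 8 + C (a ^ 7) * X ^ 7 + C (a ^ 7) * X ^ 5
        + C (a ^ 2) * X ^ 4 + C (a ^ 11) * X ^ 3 + C (a ^ 8) * X ^ 2 + C (a ^ 6) * X
        + C (a ^ 14) with hQ
  have hdeg : Q.natDegree = 13 := by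
    rw [hQ]
    compute_degree!
  have hQ0 : Q ≠ 0 := by
    intro h
    rw [h] at hdeg
    simp at hdeg
  refine ⟨?_, ?_⟩
  · have hu : ¬ IsUnit Q := by
      intro h
      have := natDegree_eq_zero_of_isUnit h
      omega
    obtain ⟨f, hf, q, hq⟩ := WfDvdMonoid.exists_irreducible_factor hu hQ0
    have hdvd : f ∣ X ^ (Nat.card K) ^ 13 - X := by
      rw [Nat.card_eq_fintype_card, hK, ← AdjoinRoot.mk_eq_zero, map_sub, map_pow,
        AdjoinRoot.mk_X, sub_eq_zero]
      apply SplitF16.pow_eq (a := AdjoinRoot.of f a)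
      · have := congrArg (AdjoinRoot.of f) h2
        rwa [map_ofNat, map_zero] at this
      · have := congrArg (AdjoinRoot.of f) ha
        simpa using this
      · have : AdjoinRoot.mk f Q = 0 := AdjoinRoot.mk_eq_zero.2 ⟨q, hq⟩
        simpa [hQ] using this
    have hd := hf.natDegree_dvd_of_dvd_X_pow_card_pow_sub_X hdvd
    rcases (Nat.dvd_prime (by norm_num)).1 hd with h1 | h13
    · exfalso
      obtain ⟨r, hr⟩ := exists_root_of_degree_eq_one
        (degree_eq_iff_natDegree_eq_of_pos (by norm_num) |>.2 h1)
      have : Q.eval r = 0 := by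
        rw [hq, eval_mul, hr.eq_zero, zero_mul]
      apply SplitF16.no_root hK h2 a ha r
      simpa [hQ] using this
    · have hq0 : q ≠ 0 := by
        rintro rfl
        exact hQ0 (by rw [hq, mul_zero])
      have hn := natDegree_mul hf.ne_zero hq0
      rw [← hq, hdeg, h13] at hn
      have hqu : IsUnit q := isUnit_iff_degree_eq_zero.2 (by
        rw [degree_eq_natDegree hq0]
        have : q.natDegree = 0 := by omega
        simp [this])
      rw [hq]
      exact (irreducible_mul_isUnit hqu).2 hf
  · intro L _ _ _ b hb
    apply SplitF16.exists_y (a := algebraMap K L a)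
    · have := congrArg (algebraMap K L) h2
      rwa [map_ofNat, map_zero] at this
    · have := congrArg (algebraMap K L) ha
      simpa using this
    · simpa [hQ] using hb
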